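/- Let λ ∈ Λ(n,r) be a bicomposition of r, let w ∈ W_r and let 0 ≤ i ≤ r−1. Suppose that both t = t^λ·w and t·s_i are row standard. Then ℓ(w s_i) = ℓ(w) + 1 if and only if one of the following holds: (i) both i and i+1 are entries of t and row_t(i) < row_t(i+1); (ii) both −i and −i−1 are entries of t and row_t(−i−1) < row_t(−i); (iii) both −i and i+1 are entries of t; (iv) i = 0 and 1 is an entry of t^{(2)}. -/

import Mathlib

/-!
As `w` is odd, `w 0 = 0`.  The positive roots of type `B_r` are encoded as the pairs `(a, b)`
with `|a| < b ≤ r` (the root `e_b - e_a`, with `e_0 = 0` and `e_{-a} = -e_a`), and `invs r w` is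
the set of pairs with `w b < w a`, that is, of positive roots made negative by `w`.  The generator
`s i` permutes the positive roots other than the simple root `(i, i + 1)` and negates that one, so
multiplying by `s i` changes the number of inversions by exactly one (`card_invs_mul`); a
`w ≠ 1` always has an inverted simple root (`eq_one_of_no_descent`).  Hence `ℓ(w)` is the number of
inversions (`len_eq`) and `ℓ(w sᵢ) = ℓ(w) + 1` if and only if `w i < w (i + 1)`, uniformly in
`0 ≤ i < r` (`len_mul_iff`).

It remains to compare positions with rows.  Larger positions lie in weakly larger rows, and two
positions in a common row carry increasing entries in every row standard bitableau.  As `t` and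
`t·sᵢ` carry the entries `i, i + 1` (or `-i - 1, -i`) in opposite orders, the two entries lie in
different rows, so comparing rows is the same as comparing positions (`row_lt_iff`).  The
conditions (i)-(iii) are then the sign patterns of `(w i, w (i + 1))` compatible with
`w i < w (i + 1)`.  For `i = 0` the condition is `0 < w 1`, and the entry `1` cannot lie in the
first component because `t·s₀` has `-1` in its place.
-/

/- The hyperoctahedral group `W_r` (the Weyl group of type `B_r`), realized as the group
of permutations `w` of `{±1, …, ±r}` satisfying `(−i)w = −(iw)`.  We realize its elements
inside `Equiv.Perm ℤ`, letting `w` act on `i` on the *right* via `i·w := w⁻¹ i` (so that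
`i·(wd) = (i·w)·d` and products of group elements can be written in the same order as in
the paper). -/

namespace QQS

abbrev G : Type := Equiv.Perm ℤ

/-- The generators `s₀ = (1,−1)` and `sᵢ = (i,i+1)(−i,−i−1)`. -/
def s (i : ℕ) : G :=
  if i = 0 then Equiv.swap 1 (-1)
  else Equiv.swap (i : ℤ) ((i : ℤ) + 1) * Equiv.swap (-(i : ℤ)) (-((i : ℤ) + 1))

/-- The generating set `{s₀, s₁, …, s_{r−1}}` of `W_r`. -/
def gens (r : ℕ) : Set G := {x | ∃ i, i < r ∧ x = s i}

/-- Membership in `W_r`: permutations of `{±1, …, ±r}` commuting with negation. -/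
def inW (r : ℕ) (w : G) : Prop :=
  (∀ i : ℤ, w (-i) = -(w i)) ∧ ∀ i : ℤ, (r : ℤ) < |i| → w i = i

/-- The length `ℓ(w)` of `w ∈ W_r` with respect to the generators `s₀, …, s_{r−1}`. -/
noncomputable def len (r : ℕ) (w : G) : ℕ :=
  sInf {n | ∃ l : List G, l.length = n ∧ (∀ x ∈ l, x ∈ gens r) ∧ l.prod = w}

/-- The partial sum of the first `k` parts of a composition. -/
def psum (l : List ℕ) (k : ℕ) : ℕ := (l.take k).sum

end QQS
namespace QQS

/- Bitableaux.  Given an `a`-bicomposition `λ = (l1, l2)` of `r`, the superstandard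
bitableau `t^λ` has `1, …, a` entered in order along the rows of the first component and
`a+1, …, r` in order along the rows of the second component.  A general `λ`-bitableau is
`t^λ·w` for `w ∈ W_r`; since `w` acts on entries on the right (`i·w = w⁻¹ i`), the entry
of `t^λ·w` at a given cell `p` is `w⁻¹ (tlamE a l1 l2 p)`. -/

/-- `x` and `y` lie (strictly) inside the same row-interval of the composition `l`,
i.e. the entries `x` and `y` lie in the same row of the row-filling of `l`. -/
def sameRowZ (l : List ℕ) (x y : ℤ) : Prop :=
  ∃ k : ℕ, (psum l k : ℤ) < x ∧ x ≤ (psum l (k + 1) : ℤ) ∧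
    (psum l k : ℤ) < y ∧ y ≤ (psum l (k + 1) : ℤ)

/-- The (0-based) index of the row containing the entry `m` in the row-filling of the
composition `l`. -/
def rowIdxZ (l : List ℕ) (m : ℤ) : ℕ :=
  ((Finset.range l.length).filter (fun k => (psum l (k + 1) : ℤ) < m)).card

/-- `row_t`: given the bicomposition `(l1, l2)` (with `n` parts in total), the row label
of the cell of `t^λ` holding the value `m`; rows of the first component are labelled
`1, …` and rows `j` of the second component are labelled `n + j`. -/
def rowOfVal (n : ℕ) (l1 l2 : List ℕ) (m : ℤ) : ℕ :=
  if m ≤ (l1.sum : ℤ) then rowIdxZ l1 m + 1 else n + rowIdxZ l2 (m - l1.sum) + 1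

/-- The bitableau `t^λ·w` is row standard: all entries of the first component are
positive, and the entries increase from left to right along each row of each
component.  Here `a = l1.sum`. -/
def rowStd (a : ℕ) (l1 l2 : List ℕ) (w : G) : Prop :=
  (∀ i j : ℕ, j < l1.getD i 0 → 0 < w⁻¹ ((psum l1 i + j + 1 : ℕ) : ℤ)) ∧
  (∀ i j : ℕ, j + 1 < l1.getD i 0 →
    w⁻¹ ((psum l1 i + j + 1 : ℕ) : ℤ) < w⁻¹ ((psum l1 i + j + 2 : ℕ) : ℤ)) ∧
  (∀ i j : ℕ, j + 1 < l2.getD i 0 →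
    w⁻¹ ((a + psum l2 i + j + 1 : ℕ) : ℤ) < w⁻¹ ((a + psum l2 i + j + 2 : ℕ) : ℤ))

/-- `p = (cpt, i, j)` is a cell of the diagram of the bicomposition `(l1, l2)`;
`cpt = true` denotes the first component. -/
def cell (l1 l2 : List ℕ) (p : Bool × ℕ × ℕ) : Prop :=
  p.2.2 < (if p.1 then l1 else l2).getD p.2.1 0

instance cellDec (l1 l2 : List ℕ) : DecidablePred (cell l1 l2) := fun p =>
  inferInstanceAs (Decidable (p.2.2 < (if p.1 then l1 else l2).getD p.2.1 0))

/-- The entry of the bitableau `t^λ` at the cell `p`, where `a = l1.sum`. -/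
def tlamE (a : ℕ) (l1 l2 : List ℕ) (p : Bool × ℕ × ℕ) : ℤ :=
  if p.1 then ((psum l1 p.2.1 + p.2.2 + 1 : ℕ) : ℤ)
  else ((a + psum l2 p.2.1 + p.2.2 + 1 : ℕ) : ℤ)

end QQS
namespace QQS

/-! ### The generators -/

lemma s_zero_apply (x : ℤ) : s 0 x = if x = 1 then -1 else if x = -1 then 1 else x := by
  simp [s, Equiv.swap_apply_def]

lemma s_pos_apply {i : ℕ} (hi : 0 < i) (x : ℤ) :
    s i x = if x = i then (i : ℤ) + 1 else if x = i + 1 then (i : ℤ) else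
      if x = -i then -((i : ℤ) + 1) else if x = -(i + 1) then -(i : ℤ) else x := by
  have h : i ≠ 0 := by omega
  simp only [s, h, if_false, Equiv.Perm.mul_apply, Equiv.swap_apply_def]
  split_ifs <;> omega

lemma s_s (i : ℕ) (x : ℤ) : s i (s i x) = x := by
  rcases Nat.eq_zero_or_pos i with rfl | hi
  · rw [s_zero_apply x]; split_ifs <;> simp_all [s_zero_apply]
  · rw [s_pos_apply hi x]; split_ifs <;> rw [s_pos_apply hi] <;> split_ifs <;> omega

lemma inv_apply (w : G) (x : ℤ) : w⁻¹ (w x) = x := w.symm_apply_apply x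

lemma s_mul_s (i : ℕ) : s i * s i = 1 := Equiv.ext fun x => by simp [s_s]

lemma s_inv (i : ℕ) : (s i)⁻¹ = s i := inv_eq_of_mul_eq_one_left (s_mul_s i)

lemma inW_s {r i : ℕ} (hi : i < r) : inW r (s i) := by
  rcases Nat.eq_zero_or_pos i with rfl | h
  · constructor
    · intro x; simp only [s_zero_apply]; split_ifs <;> omega
    · intro x hx; simp only [s_zero_apply]
      rw [lt_abs] at hx
      split_ifs <;> omega
  · constructor
    · intro x; simp only [s_pos_apply h]; split_ifs <;> omega
    · intro x hx; simp only [s_pos_apply h]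
      rw [lt_abs] at hx
      split_ifs <;> omega

lemma inW_one (r : ℕ) : inW r 1 := ⟨fun _ => rfl, fun _ _ => rfl⟩

lemma inW_mul {r : ℕ} {v w : G} (hv : inW r v) (hw : inW r w) : inW r (v * w) := by
  refine ⟨fun x => ?_, fun x hx => ?_⟩
  · simp [hw.1, hv.1]
  · simp [hw.2 x hx, hv.2 x hx]

lemma inW_zero {r : ℕ} {w : G} (hw : inW r w) : w 0 = 0 := by
  have := hw.1 0
  simp only [neg_zero] at this
  omega

lemma inW_abs_le {r : ℕ} {w : G} (hw : inW r w) {x : ℤ} (hx : |x| ≤ r) : |w x| ≤ r := by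
  by_contra h
  push Not at h
  have := w.injective (hw.2 _ h)
  rw [this] at h
  exact absurd hx (not_le.2 h)

/-! ### Inversions -/

/-- The inversions of `w`: the pairs `(a, b)` with `|a| < b ≤ r` (encoding the positive root
`e_b - e_a`, where `e_0 = 0` and `e_{-a} = -e_a`) whose order is reversed by `w`. -/
noncomputable def invs (r : ℕ) (w : G) : Finset (ℤ × ℤ) :=
  (Finset.Icc (-(r : ℤ)) r ×ˢ Finset.Icc (-(r : ℤ)) r).filter
    fun p => |p.1| < p.2 ∧ w p.2 < w p.1

lemma mem_invs {r : ℕ} {w : G} {p : ℤ × ℤ} :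
    p ∈ invs r w ↔ |p.1| < p.2 ∧ p.2 ≤ r ∧ w p.2 < w p.1 := by
  simp only [invs, Finset.mem_filter, Finset.mem_product, Finset.mem_Icc, abs_lt]
  constructor
  · rintro ⟨h1, h2, h3⟩; exact ⟨h2, h1.2.2, h3⟩
  · rintro ⟨h1, h2, h3⟩; exact ⟨by omega, h1, h3⟩

/-- The action of `s i` on positive roots; the simple root `(i, i + 1)`, which `s i` negates, is
left fixed instead.  The root `(-i, i + 1)` is fixed by `s i`, since `(-(i + 1), i)` encodes the
same root as `(-i, i + 1)`. -/
def rootMap (i : ℕ) (p : ℤ × ℤ) : ℤ × ℤ :=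
  if p.2 = i + 1 ∧ (p.1 = i ∨ p.1 = -i) then p else (s i p.1, s i p.2)

/-- `rootMap i` is an involution of the set of positive roots. -/
lemma rootMap_spec {r i : ℕ} (hi : i < r) {p : ℤ × ℤ} (h1 : |p.1| < p.2) (h2 : p.2 ≤ r) :
    |(rootMap i p).1| < (rootMap i p).2 ∧ (rootMap i p).2 ≤ r ∧
      rootMap i (rootMap i p) = p := by
  obtain ⟨a, b⟩ := p
  simp only [abs_lt] at *
  by_cases hc : b = i + 1 ∧ (a = i ∨ a = -i)
  · have e : rootMap i (a, b) = (a, b) := if_pos hc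
    simp only [e, and_true]
    exact ⟨h1, h2⟩
  · have e : rootMap i (a, b) = (s i a, s i b) := by simp only [rootMap, hc, if_false]
    rw [e]
    have key : -(s i b) < s i a ∧ s i a < s i b ∧ s i b ≤ r ∧
        ¬ (s i b = i + 1 ∧ (s i a = i ∨ s i a = -i)) := by
      rcases Nat.eq_zero_or_pos i with rfl | h
      · simp only [s_zero_apply]
        refine ⟨?_, ?_, ?_, ?_⟩ <;> split_ifs <;> omega
      · simp only [s_pos_apply h]
        refine ⟨?_, ?_, ?_, ?_⟩ <;> split_ifs <;> omega
    refine ⟨⟨key.1, key.2.1⟩, key.2.2.1, ?_⟩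
    simp only [rootMap, key.2.2.2, if_false, s_s]

lemma s_at {i : ℕ} : s i ((i : ℤ) + 1) = if i = 0 then -1 else (i : ℤ) := by
  rcases Nat.eq_zero_or_pos i with rfl | h
  · simp [s_zero_apply]
  · rw [s_pos_apply h]; split_ifs <;> omega

lemma s_at' {i : ℕ} : s i (i : ℤ) = if i = 0 then 0 else (i : ℤ) + 1 := by
  rcases Nat.eq_zero_or_pos i with rfl | h
  · simp [s_zero_apply]
  · rw [s_pos_apply h]; split_ifs <;> omega

/-- Away from the simple root, `w * s i` inverts a root iff `w` inverts its image. -/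
lemma rootMap_inv {r i : ℕ} {w : G} (hw : inW r w) {p : ℤ × ℤ} (hp : p ≠ ((i : ℤ), (i : ℤ) + 1)) :
    (w * s i) p.2 < (w * s i) p.1 ↔ w (rootMap i p).2 < w (rootMap i p).1 := by
  obtain ⟨a, b⟩ := p
  simp only [Equiv.Perm.mul_apply]
  by_cases hc : b = i + 1 ∧ (a = i ∨ a = -i)
  · simp only [rootMap, hc, and_self, if_true]
    obtain ⟨rfl, rfl | rfl⟩ := hc
    · exact absurd rfl hp
    · have hi0 : i ≠ 0 := by rintro rfl; exact hp (by simp)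
      have hs : s i (-(i : ℤ)) = -((i : ℤ) + 1) := by
        rw [s_pos_apply (Nat.pos_of_ne_zero hi0)]; split_ifs <;> omega
      rw [s_at, hs, if_neg hi0, hw.1, hw.1]
      omega
  · simp only [rootMap, hc, if_false]

lemma card_erase_invs {r i : ℕ} (hi : i < r) {w : G} (hw : inW r w) :
    ((invs r (w * s i)).erase ((i : ℤ), (i : ℤ) + 1)).card =
      ((invs r w).erase ((i : ℤ), (i : ℤ) + 1)).card := by
  have fixα : rootMap i ((i : ℤ), (i : ℤ) + 1) = ((i : ℤ), (i : ℤ) + 1) := by simp [rootMap]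
  have ne {p : ℤ × ℤ} (h1 : |p.1| < p.2) (h2 : p.2 ≤ r) (h : p ≠ ((i : ℤ), (i : ℤ) + 1)) :
      rootMap i p ≠ ((i : ℤ), (i : ℤ) + 1) := by
    intro h'
    have := (rootMap_spec hi h1 h2).2.2
    rw [h', fixα] at this
    exact h this.symm
  refine Finset.card_nbij' (rootMap i) (rootMap i) ?_ ?_ ?_ ?_
  · intro p hp
    simp only [Finset.coe_erase, Set.mem_sdiff, Finset.mem_coe, mem_invs,
      Set.mem_singleton_iff] at hp ⊢
    obtain ⟨⟨h1, h2, h3⟩, h4⟩ := hp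
    have := rootMap_spec hi h1 h2
    exact ⟨⟨this.1, this.2.1, (rootMap_inv hw h4).1 h3⟩, ne h1 h2 h4⟩
  · intro p hp
    simp only [Finset.coe_erase, Set.mem_sdiff, Finset.mem_coe, mem_invs,
      Set.mem_singleton_iff] at hp ⊢
    obtain ⟨⟨h1, h2, h3⟩, h4⟩ := hp
    have := rootMap_spec hi h1 h2
    refine ⟨⟨this.1, this.2.1, (rootMap_inv hw (ne h1 h2 h4)).2 ?_⟩, ne h1 h2 h4⟩
    rwa [this.2.2]
  · intro p hp
    simp only [Finset.coe_erase, Set.mem_sdiff, Finset.mem_coe, mem_invs] at hp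
    exact (rootMap_spec hi hp.1.1 hp.1.2.1).2.2
  · intro p hp
    simp only [Finset.coe_erase, Set.mem_sdiff, Finset.mem_coe, mem_invs] at hp
    exact (rootMap_spec hi hp.1.1 hp.1.2.1).2.2

lemma simple_mem_invs {r i : ℕ} (hi : i < r) {w : G} :
    ((i : ℤ), (i : ℤ) + 1) ∈ invs r w ↔ w ((i : ℤ) + 1) < w i := by
  rw [mem_invs]
  simp only [abs_lt]
  constructor
  · exact fun h => h.2.2
  · exact fun h => ⟨by omega, by omega, h⟩

lemma simple_ne (i : ℕ) (w : G) : w i ≠ w ((i : ℤ) + 1) := fun h => by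
  have := w.injective h
  omega

/-- `w * s i` inverts the simple root `(i, i + 1)` iff `w` does not. -/
lemma simple_flip {r : ℕ} (i : ℕ) {w : G} (hw : inW r w) :
    (w * s i) ((i : ℤ) + 1) < (w * s i) i ↔ w i < w ((i : ℤ) + 1) := by
  simp only [Equiv.Perm.mul_apply, s_at, s_at']
  split_ifs with h
  · subst h
    have := inW_zero hw
    have := hw.1 1
    simp only [Nat.cast_zero, zero_add]
    omega
  · exact Iff.rfl

/-- Multiplication by `s i` changes the number of inversions by one, upwards exactly when
`w i < w (i + 1)`. -/
lemma card_invs_mul {r i : ℕ} (hi : i < r) {w : G} (hw : inW r w) :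
    (w i < w ((i : ℤ) + 1) ∧ (invs r (w * s i)).card = (invs r w).card + 1) ∨
    (w ((i : ℤ) + 1) < w i ∧ (invs r (w * s i)).card + 1 = (invs r w).card) := by
  have h := card_erase_invs hi hw
  have hf := simple_flip i hw
  rcases lt_or_gt_of_ne (simple_ne i w) with h1 | h1
  · left
    refine ⟨h1, ?_⟩
    have m1 := (simple_mem_invs hi).2 (hf.2 h1)
    have m2 : ((i : ℤ), (i : ℤ) + 1) ∉ invs r w := fun h' => by
      have := (simple_mem_invs hi).1 h'; omega
    rw [Finset.erase_eq_of_notMem m2] at h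
    rw [← h, Finset.card_erase_add_one m1]
  · right
    refine ⟨h1, ?_⟩
    have m1 := (simple_mem_invs hi).2 h1
    have m2 : ((i : ℤ), (i : ℤ) + 1) ∉ invs r (w * s i) := fun h' => by
      have := hf.1 ((simple_mem_invs hi).1 h'); omega
    rw [Finset.erase_eq_of_notMem m2] at h
    rw [h, Finset.card_erase_add_one m1]

/-! ### Length is the number of inversions -/

lemma eq_one_of_no_descent {r : ℕ} {w : G} (hw : inW r w)
    (h : ∀ i : ℕ, i < r → w i < w ((i : ℤ) + 1)) : w = 1 := by
  have lo : ∀ k : ℕ, k ≤ r → (k : ℤ) ≤ w k := by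
    intro k
    induction k with
    | zero => intro _; simp [inW_zero hw]
    | succ k ih =>
      intro hk
      have h1 := ih (by omega)
      have h2 := h k (by omega)
      push_cast
      omega
  have hi : ∀ d k : ℕ, k + d = r → w k ≤ k := by
    intro d
    induction d with
    | zero =>
      intro k hk
      have := inW_abs_le hw (x := k) (by rw [abs_of_nonneg] <;> omega)
      rw [abs_le] at this
      omega
    | succ d ih =>
      intro k hk
      have h1 := ih (k + 1) (by omega)
      have h2 := h k (by omega)
      push_cast at h1
      omega
  have nat : ∀ k : ℕ, w k = k := by
    intro k
    by_cases hk : k ≤ r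
    · exact le_antisymm (hi (r - k) k (by omega)) (lo k hk)
    · exact hw.2 _ (by rw [abs_of_nonneg] <;> omega)
  ext x
  obtain ⟨k, rfl | rfl⟩ := x.eq_nat_or_neg
  · exact nat k
  · rw [hw.1, nat k]; rfl

lemma invs_one (r : ℕ) : invs r 1 = ∅ := by
  ext p
  simp only [mem_invs, abs_lt, Equiv.Perm.one_apply, Finset.notMem_empty, iff_false]
  omega

lemma card_invs_le (r : ℕ) (l : List G) (hl : ∀ x ∈ l, x ∈ gens r) :
    inW r l.prod ∧ (invs r l.prod).card ≤ l.length := by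
  induction l using List.reverseRecOn with
  | nil => exact ⟨inW_one r, by simp [invs_one]⟩
  | append_singleton l x ih =>
    obtain ⟨h1, h2⟩ := ih fun y hy => hl y (by simp [hy])
    obtain ⟨i, hi, rfl⟩ := hl x (by simp)
    simp only [List.prod_append, List.prod_singleton, List.length_append, List.length_singleton]
    refine ⟨inW_mul h1 (inW_s hi), ?_⟩
    rcases card_invs_mul hi h1 with h | h <;> omega

lemma exists_word (r k : ℕ) : ∀ w : G, inW r w → (invs r w).card = k →
    ∃ l : List G, l.length = k ∧ (∀ x ∈ l, x ∈ gens r) ∧ l.prod = w := by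
  induction k with
  | zero =>
    intro w hw hk
    refine ⟨[], rfl, by simp, ?_⟩
    rw [eq_one_of_no_descent hw]
    · rfl
    · intro i hi
      rcases card_invs_mul hi hw with h | h
      · exact h.1
      · omega
  | succ k ih =>
    intro w hw hk
    obtain ⟨i, hi, hd⟩ : ∃ i : ℕ, i < r ∧ ¬ w i < w ((i : ℤ) + 1) := by
      by_contra! hcon
      have := eq_one_of_no_descent hw hcon
      rw [this, invs_one] at hk
      simp at hk
    rcases card_invs_mul hi hw with h | h
    · exact absurd h.1 hd
    · obtain ⟨l, h1, h2, h3⟩ := ih (w * s i) (inW_mul hw (inW_s hi)) (by omega)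
      refine ⟨l ++ [s i], by simp [h1], ?_, ?_⟩
      · intro x hx
        simp only [List.mem_append, List.mem_singleton] at hx
        rcases hx with hx | rfl
        · exact h2 x hx
        · exact ⟨i, hi, rfl⟩
      · simp [h3, mul_assoc, s_mul_s]

lemma len_eq {r : ℕ} {w : G} (hw : inW r w) : len r w = (invs r w).card := by
  apply le_antisymm
  · exact Nat.sInf_le (exists_word r _ w hw rfl)
  · obtain ⟨l, h1, h2, h3⟩ := Nat.sInf_mem (s := {n | ∃ l : List G, l.length = n ∧
      (∀ x ∈ l, x ∈ gens r) ∧ l.prod = w}) ⟨_, exists_word r _ w hw rfl⟩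
    have := (card_invs_le r l h2).2
    rw [h3, h1] at this
    exact this

lemma len_mul_iff {r i : ℕ} (hi : i < r) {w : G} (hw : inW r w) :
    len r (w * s i) = len r w + 1 ↔ w i < w ((i : ℤ) + 1) := by
  rw [len_eq hw, len_eq (inW_mul hw (inW_s hi))]
  rcases card_invs_mul hi hw with h | h <;> omega

/-! ### Rows of bitableaux -/

lemma psum_succ (l : List ℕ) (k : ℕ) : psum l (k + 1) = psum l k + l.getD k 0 := by
  unfold psum
  by_cases h : k < l.length
  · rw [List.sum_take_succ _ _ h, List.getD_eq_getElem _ _ h]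
  · rw [List.take_of_length_le (by omega), List.take_of_length_le (by omega),
      List.getD_eq_default _ _ (by omega)]
    rfl

lemma exists_row (l : List ℕ) {m : ℤ} (h1 : 1 ≤ m) (h2 : m ≤ l.sum) :
    ∃ k < l.length, (psum l k : ℤ) < m ∧ m ≤ psum l (k + 1) := by
  have hex : ∃ K, m ≤ psum l K := ⟨l.length, by simpa [psum] using h2⟩
  classical
  obtain ⟨k, hk⟩ : ∃ k, Nat.find hex = k + 1 := by
    refine Nat.exists_eq_succ_of_ne_zero fun h0 => ?_
    have := Nat.find_spec hex
    rw [h0] at this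
    simp [psum] at this
    omega
  refine ⟨k, ?_, ?_, ?_⟩
  · have : Nat.find hex ≤ l.length := Nat.find_min' hex (by simpa [psum] using h2)
    omega
  · have := Nat.find_min hex (m := k) (by omega)
    omega
  · rw [← hk]; exact Nat.find_spec hex

lemma rowIdxZ_mono (l : List ℕ) {m m' : ℤ} (h : m ≤ m') : rowIdxZ l m ≤ rowIdxZ l m' := by
  apply Finset.card_le_card
  intro k
  simp only [Finset.mem_filter]
  exact fun hk => ⟨hk.1, by omega⟩

lemma rowIdxZ_lt_length (l : List ℕ) {m : ℤ} (h1 : 1 ≤ m) (h2 : m ≤ l.sum) :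
    rowIdxZ l m < l.length := by
  obtain ⟨k, hk, -, hk2⟩ := exists_row l h1 h2
  calc rowIdxZ l m < (Finset.range l.length).card := by
        refine Finset.card_lt_card (Finset.filter_ssubset.2 ⟨k, by simpa using hk, by omega⟩)
    _ = l.length := by simp

/-- Two positions either lie in increasing rows or in a common row. -/
lemma rowIdxZ_lt_or (l : List ℕ) {m m' : ℤ} (h1 : 1 ≤ m) (h : m < m') (h2 : m' ≤ l.sum) :
    rowIdxZ l m < rowIdxZ l m' ∨ ∃ k, (psum l k : ℤ) < m ∧ m' ≤ psum l (k + 1) := by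
  obtain ⟨k, hk, hk1, hk2⟩ := exists_row l h1 (by omega)
  by_cases hm : m' ≤ psum l (k + 1)
  · exact Or.inr ⟨k, hk1, hm⟩
  · left
    apply Finset.card_lt_card
    rw [Finset.ssubset_iff_of_subset]
    · exact ⟨k, by simp only [Finset.mem_filter, Finset.mem_range]; omega,
        by simp only [Finset.mem_filter, Finset.mem_range]; omega⟩
    · intro j
      simp only [Finset.mem_filter]
      exact fun hj => ⟨hj.1, by omega⟩

lemma lt_of_consecutive (f : ℤ → ℤ) (p L : ℕ)
    (hf : ∀ j : ℕ, j + 1 < L → f ((p + j + 1 : ℕ) : ℤ) < f ((p + j + 2 : ℕ) : ℤ))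
    {m m' : ℤ} (h1 : (p : ℤ) < m) (h : m < m') (h2 : m' ≤ p + L) : f m < f m' := by
  have key : ∀ d j : ℕ, j + d + 1 < L →
      f ((p + j + 1 : ℕ) : ℤ) < f ((p + j + d + 2 : ℕ) : ℤ) := by
    intro d
    induction d with
    | zero => intro j hj; exact hf j hj
    | succ d ih =>
      intro j hj
      have a := ih j (by omega)
      have b := hf (j + d + 1) (by omega)
      rw [show p + (j + d + 1) + 1 = p + j + d + 2 by omega,
        show p + (j + d + 1) + 2 = p + j + (d + 1) + 2 by omega] at b
      exact a.trans b
  have := key (m' - m - 1).toNat (m - p - 1).toNat (by omega)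
  convert this using 2 <;> omega

/-- Positions in increasing order lie in increasing rows, or else in a common row, and then every
row standard bitableau has increasing entries there. -/
lemma row_lt_or {n : ℕ} {l1 l2 : List ℕ} (hn : l1.length + l2.length = n) {m m' : ℤ}
    (h1 : 1 ≤ m) (h : m < m') (h2 : m' ≤ (l1.sum : ℤ) + l2.sum) :
    rowOfVal n l1 l2 m < rowOfVal n l1 l2 m' ∨
      ∀ v : G, rowStd l1.sum l1 l2 v → v⁻¹ m < v⁻¹ m' := by
  unfold rowOfVal
  by_cases c' : m' ≤ (l1.sum : ℤ)
  · rw [if_pos c', if_pos (by omega)]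
    rcases rowIdxZ_lt_or l1 h1 h c' with h' | ⟨k, hk1, hk2⟩
    · left; omega
    · right
      intro v hv
      rw [psum_succ] at hk2
      exact lt_of_consecutive (fun x => v⁻¹ x) (psum l1 k) (l1.getD k 0) (hv.2.1 k) hk1 h
        (by push_cast at hk2; exact hk2)
  · rw [if_neg c']
    by_cases c : m ≤ (l1.sum : ℤ)
    · rw [if_pos c]
      have := rowIdxZ_lt_length l1 h1 c
      left; omega
    · rw [if_neg c]
      rcases rowIdxZ_lt_or l2 (m := m - l1.sum) (m' := m' - l1.sum) (by omega) (by omega)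
        (by omega) with h' | ⟨k, hk1, hk2⟩
      · left; omega
      · right
        intro v hv
        rw [psum_succ] at hk2
        rw [Nat.cast_add] at hk2
        exact lt_of_consecutive (fun x => v⁻¹ x) (l1.sum + psum l2 k) (l2.getD k 0) (hv.2.2 k)
          (by rw [Nat.cast_add]; omega) h (by rw [Nat.cast_add]; omega)

lemma row_mono {n : ℕ} {l1 l2 : List ℕ} (hn : l1.length + l2.length = n) {m m' : ℤ}
    (h1 : 1 ≤ m) (h : m ≤ m') : rowOfVal n l1 l2 m ≤ rowOfVal n l1 l2 m' := by
  unfold rowOfVal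
  by_cases c' : m' ≤ (l1.sum : ℤ)
  · rw [if_pos c', if_pos (by omega)]
    have := rowIdxZ_mono l1 h
    omega
  · rw [if_neg c']
    by_cases c : m ≤ (l1.sum : ℤ)
    · rw [if_pos c]
      have := rowIdxZ_lt_length l1 h1 c
      omega
    · rw [if_neg c]
      have := rowIdxZ_mono l2 (m := m - l1.sum) (m' := m' - l1.sum) (by omega)
      omega

/-- If two row standard bitableaux carry the same two entries, interchanged, at positions `m` and
`m'`, then these positions lie in different rows, and so are ordered as their rows are. -/
lemma row_lt_iff {n : ℕ} {l1 l2 : List ℕ} (hn : l1.length + l2.length = n) {m m' : ℤ}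
    (h1 : 1 ≤ m) (h1' : 1 ≤ m') (h2' : m' ≤ (l1.sum : ℤ) + l2.sum)
    {v v' : G} (hv : rowStd l1.sum l1 l2 v) (hv' : rowStd l1.sum l1 l2 v')
    (e : v'⁻¹ m = v⁻¹ m') (e' : v'⁻¹ m' = v⁻¹ m) :
    rowOfVal n l1 l2 m < rowOfVal n l1 l2 m' ↔ m < m' := by
  constructor
  · intro h
    by_contra hc
    have := row_mono (n := n) (l1 := l1) (l2 := l2) hn h1' (not_lt.1 hc)
    omega
  · intro h
    rcases row_lt_or hn h1 h h2' with h' | h'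
    · exact h'
    · have a := h' v hv
      have b := h' v' hv'
      rw [e, e'] at b
      omega

lemma rowStd_pos {l1 l2 : List ℕ} {v : G} (hv : rowStd l1.sum l1 l2 v) {m : ℤ}
    (h1 : 1 ≤ m) (h2 : m ≤ l1.sum) : 0 < v⁻¹ m := by
  obtain ⟨k, -, hk1, hk2⟩ := exists_row l1 h1 h2
  rw [psum_succ] at hk2
  have := hv.1 k (m - psum l1 k - 1).toNat (by push_cast at hk2; omega)
  convert this using 2
  omega

/-- Let `λ = (l1, l2) ∈ Λ(n,r)` be a bicomposition of `r`, let
`w ∈ W_r` and `0 ≤ i ≤ r−1`, and suppose that both `t = t^λ·w` and `t·sᵢ` are row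
standard.  Then `ℓ(w sᵢ) = ℓ(w) + 1` if and only if one of the following holds:
(i) both `i` and `i+1` are entries of `t` and `row_t(i) < row_t(i+1)`;
(ii) both `−i` and `−i−1` are entries of `t` and `row_t(−i−1) < row_t(−i)`;
(iii) both `−i` and `i+1` are entries of `t`; or
(iv) `i = 0` and `1` is an entry of `t⁽²⁾`.
(An integer `j` is an entry of `t = t^λ·w` if and only if `1 ≤ w j ≤ r`, in which case
its row is `row_t(j) = rowOfVal n l1 l2 (w j)`.) -/
theorem length_add_one_iff (n r : ℕ) (l1 l2 : List ℕ)
    (hn : l1.length + l2.length = n) (hr : l1.sum + l2.sum = r)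
    (w : G) (hw : inW r w) (i : ℕ) (hi : i ≤ r - 1)
    (ht : rowStd l1.sum l1 l2 w) (hts : rowStd l1.sum l1 l2 (w * s i)) :
    len r (w * s i) = len r w + 1 ↔
      (1 ≤ w (i : ℤ) ∧ w (i : ℤ) ≤ (r : ℤ) ∧
        1 ≤ w ((i : ℤ) + 1) ∧ w ((i : ℤ) + 1) ≤ (r : ℤ) ∧
        rowOfVal n l1 l2 (w (i : ℤ)) < rowOfVal n l1 l2 (w ((i : ℤ) + 1))) ∨
      (1 ≤ w (-(i : ℤ)) ∧ w (-(i : ℤ)) ≤ (r : ℤ) ∧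
        1 ≤ w (-((i : ℤ) + 1)) ∧ w (-((i : ℤ) + 1)) ≤ (r : ℤ) ∧
        rowOfVal n l1 l2 (w (-((i : ℤ) + 1))) < rowOfVal n l1 l2 (w (-(i : ℤ)))) ∨
      (1 ≤ w (-(i : ℤ)) ∧ w (-(i : ℤ)) ≤ (r : ℤ) ∧
        1 ≤ w ((i : ℤ) + 1) ∧ w ((i : ℤ) + 1) ≤ (r : ℤ)) ∨
      (i = 0 ∧ 1 ≤ w 1 ∧ w 1 ≤ (r : ℤ) ∧ (l1.sum : ℤ) < w 1) := by
  have hw0 := inW_zero hw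
  rcases Nat.eq_zero_or_pos r with hr0 | hrpos
  · -- For `r = 0` there are no generators, so `len` takes only the value `0`.
    subst hr0
    have hz (v : G) : len 0 v = 0 := by
      rw [len, Nat.sInf_eq_zero]
      by_cases h : v = 1
      · exact Or.inl ⟨[], rfl, by simp, h.symm⟩
      · right
        refine Set.eq_empty_of_forall_notMem ?_
        rintro k ⟨l, -, h2, h3⟩
        rcases l with _ | ⟨x, l⟩
        · exact h h3.symm
        · obtain ⟨j, hj, -⟩ := h2 x (by simp)
          omega
    rw [hz, hz]
    have : (0 : ℕ) ≠ 0 + 1 := by omega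
    omega
  have hir : i < r := by omega
  rw [len_mul_iff hir hw]
  have hb1 := inW_abs_le hw (x := (i : ℤ)) (by rw [abs_of_nonneg] <;> omega)
  have hb2 := inW_abs_le hw (x := (i : ℤ) + 1) (by rw [abs_of_nonneg] <;> omega)
  rw [abs_le] at hb1 hb2
  have hrz : (l1.sum : ℤ) + l2.sum = r := by exact_mod_cast hr
  rcases Nat.eq_zero_or_pos i with rfl | hipos
  · simp only [Nat.cast_zero, zero_add, neg_zero, hw0] at *
    -- An entry `1` of the first component would become the entry `-1` of `t·s₀`.
    have hfirst : 0 < w 1 → (l1.sum : ℤ) < w 1 := by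
      intro h
      by_contra hc
      have := rowStd_pos hts (m := w 1) (by omega) (by omega)
      rw [mul_inv_rev, s_inv, Equiv.Perm.mul_apply, inv_apply,
        s_zero_apply] at this
      simp at this
    constructor
    · intro h
      exact Or.inr (Or.inr (Or.inr ⟨trivial, by omega, hb2.2, hfirst h⟩))
    · omega
  · have hne : w ((i : ℤ) + 1) ≠ 0 := fun h => by
      have := w.injective (h.trans hw0.symm); omega
    have hne' : w (i : ℤ) ≠ 0 := fun h => by
      have := w.injective (h.trans hw0.symm); omega
    have e (x : ℤ) : (w * s i)⁻¹ (w x) = s i x := by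
      rw [mul_inv_rev, s_inv, Equiv.Perm.mul_apply, inv_apply]
    have n1 := hw.1 i
    have n2 := hw.1 ((i : ℤ) + 1)
    have s1 : s i (i : ℤ) = i + 1 := by rw [s_at', if_neg (by omega)]
    have s2 : s i ((i : ℤ) + 1) = i := by rw [s_at, if_neg (by omega)]
    have s3 := (inW_s hir).1 i
    have s4 := (inW_s hir).1 ((i : ℤ) + 1)
    have A : 1 ≤ w (i : ℤ) → 1 ≤ w ((i : ℤ) + 1) →
        (rowOfVal n l1 l2 (w (i : ℤ)) < rowOfVal n l1 l2 (w ((i : ℤ) + 1)) ↔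
          w (i : ℤ) < w ((i : ℤ) + 1)) := fun h h' =>
      row_lt_iff hn h h' (by omega) ht hts (by rw [e, s1, inv_apply])
        (by rw [e, s2, inv_apply])
    have B : 1 ≤ w (-((i : ℤ) + 1)) → 1 ≤ w (-(i : ℤ)) →
        (rowOfVal n l1 l2 (w (-((i : ℤ) + 1))) < rowOfVal n l1 l2 (w (-(i : ℤ))) ↔
          w (-((i : ℤ) + 1)) < w (-(i : ℤ))) := fun h h' =>
      row_lt_iff hn h h' (by omega) ht hts (by rw [e, s4, s2, inv_apply])
        (by rw [e, s3, s1, inv_apply])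
    rcases lt_or_gt_of_ne hne with h2 | h2 <;> rcases lt_or_gt_of_ne hne' with h1 | h1
    · have B := B (by omega) (by omega)
      omega
    · omega
    · omega
    · have A := A (by omega) (by omega)
      omega

end QQS
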